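/- Let G be a finite simple graph on vertex set V, let B be a zero forcing set of G, and let A ∈ S(G). If x is a vector with A x = 0 and x vanishes on every vertex of B, then x = 0. -/

import Mathlib

/-- One step of the zero forcing color change rule: `B'` is obtained from `B` by adding
a vertex `w` which is the unique neighbor outside `B` of some vertex `v ∈ B`. -/
def ZFStep {V : Type*} [DecidableEq V] (G : SimpleGraph V) (B B' : Finset V) : Prop :=
  ∃ v ∈ B, ∃ w : V, w ∉ B ∧ G.Adj v w ∧ (∀ u : V, G.Adj v u → u ∉ B → u = w) ∧
    B' = insert w B

/-- `B` is a zero forcing set of `G` if repeated application of the color change rule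
starting from `B` colors all vertices black. -/
def IsZeroForcingSet {V : Type*} [Fintype V] [DecidableEq V]
    (G : SimpleGraph V) (B : Finset V) : Prop :=
  Relation.ReflTransGen (ZFStep G) B Finset.univ

/-!
If `A x = 0` and `x` vanishes on a set `C` in which `v` forces `w`, then the `v`-th equation of the
system involves no other unknown than `x w`: the terms of `C` vanish with `x`, and `w` is the only
neighbor of `v` outside `C`. Hence `A v w * x w = 0` with `A v w ≠ 0`, so that `x w = 0`.
-/

open scoped Matrix

theorem eq_zero_of_dotProduct_eq_zero {ι R : Type*} [Fintype ι] [NonUnitalNonAssocSemiring R]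
    [NoZeroDivisors R] {a x : ι → R} {w : ι} (hax : a ⬝ᵥ x = 0) (haw : a w ≠ 0)
    (hne : ∀ u, u ≠ w → a u = 0 ∨ x u = 0) : x w = 0 := by
  have hsum : a ⬝ᵥ x = a w * x w :=
    Fintype.sum_eq_single w fun u hu => mul_eq_zero.2 (hne u hu)
  exact (mul_eq_zero.1 (hsum.symm.trans hax)).resolve_left haw

section ZeroForcing

variable {V R : Type*} [Fintype V] [DecidableEq V] [NonUnitalNonAssocSemiring R]
  [NoZeroDivisors R] {G : SimpleGraph V} {A : Matrix V V R} {x : V → R}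

theorem ZFStep.eq_zero_of_mulVec_eq_zero {C C' : Finset V} (hstep : ZFStep G C C')
    (hpat : ∀ i j, i ≠ j → (A i j ≠ 0 ↔ G.Adj i j)) (hx : A *ᵥ x = 0)
    (hxC : ∀ i ∈ C, x i = 0) : ∀ i ∈ C', x i = 0 := by
  obtain ⟨v, hvC, w, -, hvw, huniq, rfl⟩ := hstep
  have hterm : ∀ u, u ≠ w → A v u = 0 ∨ x u = 0 := by
    intro u huw
    by_cases huC : u ∈ C
    · exact .inr (hxC u huC)
    · have hvu : v ≠ u := ne_of_mem_of_not_mem hvC huC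
      have hnadj : ¬G.Adj v u := fun h => huw (huniq u h huC)
      exact .inl (not_not.1 (mt (hpat v u hvu).1 hnadj))
  have hxw : x w = 0 :=
    eq_zero_of_dotProduct_eq_zero (congrFun hx v) ((hpat v w hvw.ne).2 hvw) hterm
  exact Finset.forall_mem_insert _ _ _ |>.2 ⟨hxw, hxC⟩

theorem eq_zero_of_reflTransGen_zfStep {B C : Finset V}
    (hBC : Relation.ReflTransGen (ZFStep G) B C)
    (hpat : ∀ i j, i ≠ j → (A i j ≠ 0 ↔ G.Adj i j)) (hx : A *ᵥ x = 0)
    (hxB : ∀ i ∈ B, x i = 0) : ∀ i ∈ C, x i = 0 := by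
  induction hBC with
  | refl => exact hxB
  | tail _ hstep hxC => exact hstep.eq_zero_of_mulVec_eq_zero hpat hx hxC

end ZeroForcing

theorem null_vector_vanishing_on_zero_forcing_set_eq_zero_general
    {V R : Type*} [Fintype V] [DecidableEq V] [NonUnitalNonAssocSemiring R] [NoZeroDivisors R]
    (G : SimpleGraph V) (B : Finset V) (hB : IsZeroForcingSet G B) (A : Matrix V V R)
    (hpat : ∀ i j : V, i ≠ j → (A i j ≠ 0 ↔ G.Adj i j))
    (x : V → R) (hx : A *ᵥ x = 0) (hxB : ∀ i ∈ B, x i = 0) :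
    x = 0 :=
  funext fun i => eq_zero_of_reflTransGen_zfStep hB hpat hx hxB i (Finset.mem_univ i)

/-- If `B` is a zero forcing set of `G`, `A ∈ S(G)`, `A x = 0`, and `x` vanishes
on `B`, then `x = 0`. -/
theorem null_vector_vanishing_on_zero_forcing_set_eq_zero
    {V : Type*} [Fintype V] [DecidableEq V] (G : SimpleGraph V)
    (B : Finset V) (hB : IsZeroForcingSet G B)
    (A : Matrix V V ℂ) (hA : A.IsHermitian)
    (hpat : ∀ i j : V, i ≠ j → (A i j ≠ 0 ↔ G.Adj i j))
    (x : V → ℂ) (hx : A.mulVec x = 0) (hxB : ∀ i ∈ B, x i = 0) :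
    x = 0 :=
  null_vector_vanishing_on_zero_forcing_set_eq_zero_general G B hB A hpat x hx hxB
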